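/- For every integer m ≥ 1, the odd-order logarithmic derivative of |ζ| at 1/2 satisfies (d^{2m+1}/ds^{2m+1}) log|ζ(s)| at s = 1/2 equals (1/2)·(2m)!·(2^{2m+1} − 1)·ζ(2m+1) + (1/4)·π^{2m+1}·|E_{2m}|, where E_{2m} is the 2m-th Euler number. -/

import Mathlib

/-- Euler numbers `E_n` (`E_0 = 1`, `E_2 = -1`, `E_4 = 5`, `E_{odd} = 0`). -/
def eulerNumber : ℕ → ℚ
  | 0 => 1
  | n + 1 => -(1/2) * ∑ k : Fin (n + 1),
      ((n + 1).choose k * (1 + (-1 : ℚ) ^ (n + 1 - (k : ℕ)) : ℚ) * eulerNumber k)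

open Complex in
lemma eta_term_bound (n : ℕ) (s : ℂ) (h1 : 1/4 < s.re) (h2 : ‖s‖ < 3) :
    ‖((2 * n + 1 : ℝ) : ℂ) ^ (-s) - ((2 * n + 2 : ℝ) : ℂ) ^ (-s)‖ ≤ 3 * ((n + 1 : ℕ) : ℝ) ^ (-(5/4) : ℝ) := by
  have hs0 : -s ≠ 0 := by
    intro h; rw [neg_eq_zero] at h; subst h; norm_num at h1
  have hs1 : s ≠ 0 := by simpa using hs0
  have key := norm_image_sub_le_of_norm_deriv_le_segment' (a := (2 * n + 1 : ℝ)) (b := 2 * n + 2)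
    (f := fun x : ℝ => (x : ℂ) ^ (-s)) (f' := fun x : ℝ => (-s) * (x : ℂ) ^ (-s - 1))
    (C := 3 * ((n + 1 : ℕ) : ℝ) ^ (-(5/4) : ℝ)) ?_ ?_ (2 * n + 2) ⟨by linarith, le_refl _⟩
  · rw [norm_sub_rev]
    refine key.trans (le_of_eq ?_)
    ring
  · intro x hx
    have hx0 : 0 < x := lt_of_lt_of_le (by positivity) hx.1
    have := (hasDerivAt_ofReal_cpow_const hx0.ne' (r := -s) hs0)
    exact this.hasDerivWithinAt
  · intro x hx
    have hx0 : 0 < x := lt_of_lt_of_le (by positivity) hx.1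
    rw [norm_mul, norm_neg, Complex.norm_cpow_eq_rpow_re_of_pos hx0]
    have hx1 : ((n + 1 : ℕ) : ℝ) ≤ x := by
      push_cast; have := hx.1; have : (0:ℝ) ≤ n := by positivity
      linarith
    have h3 : (-s - 1).re ≤ -(5/4) := by simp; linarith
    have hx2 : 1 ≤ x := le_trans (by simp) hx1
    refine mul_le_mul h2.le ?_ (by positivity) (by norm_num)
    calc x ^ (-s - 1).re ≤ x ^ (-(5/4) : ℝ) := Real.rpow_le_rpow_of_exponent_le hx2 h3
      _ ≤ _ := Real.rpow_le_rpow_of_nonpos (by positivity) hx1 (by norm_num)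

noncomputable def etaT (n : ℕ) (s : ℂ) : ℂ :=
  ((2 * n + 1 : ℝ) : ℂ) ^ (-s) - ((2 * n + 2 : ℝ) : ℂ) ^ (-s)

lemma summable_bd : Summable fun n : ℕ => 3 * ((n + 1 : ℕ) : ℝ) ^ (-(5/4) : ℝ) :=
  (((Real.summable_nat_rpow (p := -(5/4))).2 (by norm_num)).comp_injective
    (add_left_injective 1)).mul_left 3

lemma eta_eq (s : ℂ) (hs : 1 < s.re) :
    ∑' n, etaT n s = (1 - 2 ^ (1 - s)) * riemannZeta s := by
  have hz := zeta_eq_tsum_one_div_nat_add_one_cpow hs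
  have hsum : Summable fun n : ℕ => 1 / ((n : ℂ) + 1) ^ s := by
    have := (Complex.summable_one_div_nat_cpow (p := s)).2 hs
    simpa [Function.comp_def] using this.comp_injective (add_left_injective 1)
  have he : Summable fun n : ℕ => 1 / (((2 * n : ℕ) : ℂ) + 1) ^ s := by
    have := hsum.comp_injective (i := fun n : ℕ => 2 * n) (fun a b h => by simpa using h)
    simpa only [Function.comp_def] using this
  have ho : Summable fun n : ℕ => 1 / (((2 * n + 1 : ℕ) : ℂ) + 1) ^ s := by
    have := hsum.comp_injective (i := fun n : ℕ => 2 * n + 1) (fun a b h => by simpa using h)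
    simpa only [Function.comp_def] using this
  have hsplit := tsum_even_add_odd (f := fun n : ℕ => 1 / ((n : ℂ) + 1) ^ s) he ho
  have ho2 : ∑' n : ℕ, 1 / (((2 * n + 1 : ℕ) : ℂ) + 1) ^ s = 2 ^ (-s) * riemannZeta s := by
    rw [hz, ← tsum_mul_left]
    refine tsum_congr fun n => ?_
    have : (((2 * n + 1 : ℕ) : ℂ) + 1) = ((2 : ℝ) : ℂ) * ((n + 1 : ℝ) : ℂ) := by
      push_cast; ring
    rw [this, Complex.mul_cpow_ofReal_nonneg (by norm_num) (by positivity), Complex.cpow_neg]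
    push_cast
    rw [one_div, mul_inv, one_div]
  have : ∀ n, etaT n s = 1 / (((2 * n : ℕ) : ℂ) + 1) ^ s - 1 / (((2 * n + 1 : ℕ) : ℂ) + 1) ^ s := by
    intro n
    rw [etaT, Complex.cpow_neg, Complex.cpow_neg, one_div, one_div]
    have h1 : ((2 * n + 1 : ℝ) : ℂ) = ((2 * n : ℕ) : ℂ) + 1 := by push_cast; ring
    have h2 : ((2 * n + 2 : ℝ) : ℂ) = ((2 * n + 1 : ℕ) : ℂ) + 1 := by push_cast; ring
    rw [h1, h2]
  rw [tsum_congr this, he.tsum_sub ho]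
  have h2 : (2:ℂ) ^ (1 - s) = 2 * 2 ^ (-s) := by
    rw [sub_eq_add_neg, Complex.cpow_add _ _ (by norm_num), Complex.cpow_one]
  rw [h2]
  rw [← hz] at hsplit
  linear_combination hsplit - 2 * ho2

lemma zeta_half_ne : riemannZeta (1/2) ≠ 0 := by
  set U : Set ℂ := {s | 1/4 < s.re} ∩ Metric.ball 0 3 with hU
  have hUo : IsOpen U := (isOpen_lt continuous_const Complex.continuous_re).inter Metric.isOpen_ball
  have hUc : Convex ℝ U := (convex_halfSpace_re_gt _).inter (convex_ball _ _)
  have hd : DifferentiableOn ℂ (fun s => ∑' n, etaT n s) U := by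
    refine Complex.differentiableOn_tsum_of_summable_norm summable_bd ?_ hUo ?_
    · intro n s hs
      apply DifferentiableAt.differentiableWithinAt
      unfold etaT
      have h1 : ((2 * n + 1 : ℝ) : ℂ) ≠ 0 := by norm_cast
      have h2 : ((2 * n + 2 : ℝ) : ℂ) ≠ 0 := by norm_cast
      exact (differentiableAt_id.neg.const_cpow (Or.inl h1)).sub
        (differentiableAt_id.neg.const_cpow (Or.inl h2))
    · intro n s hs
      exact eta_term_bound n s hs.1 (by simpa using hs.2)
  have hA : AnalyticOnNhd ℂ (fun s => (s - 1) * ∑' n, etaT n s) U :=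
    (((differentiable_id.sub_const 1).differentiableOn).mul hd).analyticOnNhd hUo
  have hB : AnalyticOnNhd ℂ (fun s => (1 - 2 ^ (1 - s)) * riemannZeta₁ s) U := by
    refine DifferentiableOn.analyticOnNhd (Differentiable.differentiableOn ?_) hUo
    refine Differentiable.mul ?_ differentiable_riemannZeta₁
    refine (differentiable_const _).sub ?_
    intro s
    exact DifferentiableAt.const_cpow (by fun_prop) (Or.inl (by norm_num))
  have h2U : (2 : ℂ) ∈ U := by constructor <;> norm_num
  have hhU : (1/2 : ℂ) ∈ U := by constructor <;> norm_num
  have heq := hA.eqOn_of_preconnected_of_eventuallyEq hB hUc.isPreconnected h2U ?_ hhU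
  · intro h0
    have hz1 : riemannZeta₁ (1/2) = 0 := by
      have := riemannZeta_eq_inv_sub_mul (s := 1/2) (by norm_num)
      rw [h0] at this
      have h3 : ((1/2 : ℂ) - 1)⁻¹ ≠ 0 := by norm_num
      exact (mul_eq_zero.1 this.symm).resolve_left h3
    simp only [hz1, mul_zero] at heq
    have h4 : ((1/2 : ℂ) - 1) ≠ 0 := by norm_num
    have h5 := (mul_eq_zero.1 heq).resolve_left h4
    have hT : ∀ n, etaT n (1/2) =
        (((2 * n + 1 : ℝ) ^ (-(1/2) : ℝ) - (2 * n + 2 : ℝ) ^ (-(1/2) : ℝ) : ℝ) : ℂ) := by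
      intro n
      rw [etaT, Complex.ofReal_sub, Complex.ofReal_cpow (by positivity), Complex.ofReal_cpow (by positivity)]
      norm_num
    have hpos : ∀ n : ℕ, 0 < ((2 * n + 1 : ℝ) ^ (-(1/2) : ℝ) - (2 * n + 2 : ℝ) ^ (-(1/2) : ℝ)) := by
      intro n
      rw [sub_pos]
      exact Real.rpow_lt_rpow_of_neg (by positivity) (by linarith) (by norm_num)
    have hsm : Summable fun n => etaT n (1/2) :=
      Summable.of_norm_bounded summable_bd
        (fun n => eta_term_bound n (1/2) (by norm_num) (by norm_num))
    simp_rw [hT] at hsm h5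
    rw [← Complex.ofReal_tsum, Complex.ofReal_eq_zero] at h5
    have hsm' := Complex.summable_ofReal.1 hsm
    exact (hsm'.tsum_pos (fun n => (hpos n).le) 0 (hpos 0)).ne' h5
  · have : {s : ℂ | 1 < s.re} ∈ nhds (2 : ℂ) :=
      (isOpen_lt continuous_const Complex.continuous_re).mem_nhds (by norm_num)
    filter_upwards [this] with s hs
    have hs1 : s ≠ 1 := by rintro rfl; norm_num at hs
    have hs2 : s - 1 ≠ 0 := sub_ne_zero.2 hs1
    rw [eta_eq s hs, riemannZeta_eq_inv_sub_mul hs1]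
    field_simp

open PowerSeries in
lemma two_eq : C (2:ℚ) = (2 : ℚ⟦X⟧) := map_ofNat _ 2

open PowerSeries in
lemma euler_gf : (PowerSeries.mk fun n => eulerNumber n / (n.factorial : ℚ)) *
    (exp ℚ + rescale (-1) (exp ℚ)) = 2 := by
  ext n
  rw [PowerSeries.coeff_mul, Finset.Nat.sum_antidiagonal_eq_sum_range_succ_mk]
  cases n with
  | zero =>
    have h2 : (coeff 0) (2 : ℚ⟦X⟧) = 2 := by
      rw [← two_eq, coeff_C]; simp
    rw [h2]
    simp only [zero_add, Finset.range_one, Finset.sum_singleton, coeff_mk, map_add, coeff_rescale, coeff_exp]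
    simp [eulerNumber]; norm_num
  | succ n =>
    rw [Finset.sum_range_succ]
    have h2 : (coeff (n+1)) (2 : ℚ⟦X⟧) = 0 := by
      rw [← two_eq, coeff_C]; simp
    rw [h2]
    have hE : eulerNumber (n+1) = -(1/2) * ∑ k ∈ Finset.range (n + 1),
      ((n + 1).choose k * (1 + (-1 : ℚ) ^ (n + 1 - (k : ℕ)) : ℚ) * eulerNumber k) := by
      rw [eulerNumber, Finset.sum_range]
    have hs : ∀ k ∈ Finset.range (n+1), (coeff k) (PowerSeries.mk fun n => eulerNumber n / (n.factorial : ℚ)) *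
        (coeff (n + 1 - k)) (exp ℚ + rescale (-1) (exp ℚ)) =
        (1 / ((n+1).factorial : ℚ)) * ((n + 1).choose k * (1 + (-1 : ℚ) ^ (n + 1 - (k : ℕ)) : ℚ) * eulerNumber k) := by
      intro k hk
      have hk' : k ≤ n + 1 := by simp at hk; omega
      rw [Nat.cast_choose ℚ hk']
      simp [coeff_exp]
      have := Nat.factorial_ne_zero (n+1)
      have := Nat.factorial_ne_zero (n+1-k)
      have := Nat.factorial_ne_zero k
      field_simp
    simp only
    rw [Finset.sum_congr rfl hs, ← Finset.mul_sum]
    simp only [coeff_mk, map_add, coeff_rescale, coeff_exp, Nat.sub_self]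
    rw [hE]
    simp
    ring

open PowerSeries in
lemma bern_quarter (m : ℕ) :
    (Polynomial.bernoulli (2*m+1)).eval (1/4 : ℚ) = -(2*m+1) * eulerNumber (2*m) / 4^(2*m+1) := by
  set e := exp ℚ with he
  have g1 := Polynomial.bernoulli_generating_function (1/4 : ℚ)
  have g3 := Polynomial.bernoulli_generating_function (3/4 : ℚ)
  have hE := congrArg (rescale (1/4 : ℚ)) euler_gf
  set B1 : ℚ⟦X⟧ := (mk fun n => Polynomial.aeval (1/4 : ℚ) ((1 / n.factorial : ℚ) • Polynomial.bernoulli n)) with hB1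
  set B3 : ℚ⟦X⟧ := (mk fun n => Polynomial.aeval (3/4 : ℚ) ((1 / n.factorial : ℚ) • Polynomial.bernoulli n)) with hB3
  rw [map_mul, map_add, rescale_rescale] at hE
  set S : ℚ⟦X⟧ := rescale (1/4 : ℚ) (PowerSeries.mk fun n => eulerNumber n / (n.factorial : ℚ)) with hS
  set q := rescale (1/4 : ℚ) (exp ℚ) with hq
  have hadd : ∀ a b : ℚ, rescale a (exp ℚ) * rescale b (exp ℚ) = rescale (a+b) (exp ℚ) :=
    fun a b => exp_mul_exp_eq_exp_add a b
  have h1 : q ^ 2 = rescale (1/2 : ℚ) (exp ℚ) := by rw [pow_two, hq, hadd]; norm_num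
  have h3 : rescale (3/4 : ℚ) (exp ℚ) = q ^ 3 := by rw [pow_succ, h1, hq, hadd]; norm_num
  have h4 : exp ℚ = q ^ 4 := by
    rw [show q^4 = q^2 * q^2 by ring, h1, hadd]; norm_num
  have hm : rescale (-1 * (1/4) : ℚ) (exp ℚ) * q = 1 := by
    rw [hq, hadd]; norm_num
  have hm' : rescale (1/4 * -1 : ℚ) (exp ℚ) * q = 1 := by
    rw [hq, hadd]; norm_num
  have h2r : rescale (1/4 : ℚ) (2 : ℚ⟦X⟧) = 2 := map_ofNat _ 2
  rw [h2r] at hE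
  have hSq : S * (q^2 + 1) = 2 * q := by
    first
    | linear_combination q * hE - S * hm
    | linear_combination q * hE - S * hm'
  rw [h3] at g3
  rw [h4] at g1 g3
  have hne : q ^ 4 - 1 ≠ (0 : ℚ⟦X⟧) := by
    intro h
    have := congrArg (coeff 1) h
    rw [← h4] at this
    simp [coeff_exp, coeff_one] at this
  have hdiff : 2 * (B3 - B1) = X * S := by
    apply mul_right_cancel₀ hne
    linear_combination 2 * g3 - 2 * g1 - X * (q^2-1) * hSq
  have hc := congrArg (coeff (2*m+1)) hdiff
  rw [coeff_succ_X_mul, ← two_eq, coeff_C_mul, map_sub, hB1, hB3, hS, coeff_rescale,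
    coeff_mk, coeff_mk, coeff_mk, map_smul, map_smul, Polynomial.coe_aeval_eq_eval,
    Polynomial.coe_aeval_eq_eval] at hc
  have hr := Polynomial.bernoulli_eval_one_sub (2*m+1) (1/4)
  rw [show (1 - 1/4 : ℚ) = 3/4 by norm_num, Odd.neg_one_pow ⟨m, rfl⟩] at hr
  rw [hr] at hc
  have := Nat.factorial_ne_zero (2*m)
  rw [Nat.factorial_succ] at hc
  simp only [smul_eq_mul] at hc
  push_cast at hc
  rw [div_pow, one_pow] at hc
  field_simp at hc ⊢
  rw [pow_succ]
  linear_combination (-1) * hc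

lemma psi_diff {x : ℝ} (hx : 0 < x) : DifferentiableAt ℝ (Real.log ∘ Real.Gamma) x := by
  refine ((Real.differentiableAt_Gamma ?_).log (Real.Gamma_ne_zero ?_)) <;>
    exact fun m ↦ ne_of_gt (by have : (0:ℝ) ≤ m := m.cast_nonneg
                               linarith)

lemma psi_rec (x : ℝ) (hx : 0 < x) :
    deriv (Real.log ∘ Real.Gamma) (x + 1) = deriv (Real.log ∘ Real.Gamma) x + 1 / x := by
  rw [← deriv_comp_add_const, one_div, ← Real.deriv_log,
    ← deriv_add (psi_diff hx) (Real.differentiableAt_log hx.ne')]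
  apply Filter.EventuallyEq.deriv_eq
  filter_upwards [eventually_gt_nhds hx] with y hy
  simp only [Function.comp_apply, Pi.add_apply,
      Real.Gamma_add_one hy.ne', Real.log_mul hy.ne' (Real.Gamma_pos_of_pos hy).ne', add_comm]

lemma psi_mono : MonotoneOn (deriv (Real.log ∘ Real.Gamma)) (Set.Ioi 0) :=
  Real.convexOn_log_Gamma.monotoneOn_deriv (fun _ hx => psi_diff hx)

lemma psi_add_nat (x : ℝ) (hx : 0 < x) (N : ℕ) :
    deriv (Real.log ∘ Real.Gamma) (x + N) = deriv (Real.log ∘ Real.Gamma) x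
      + ∑ n ∈ Finset.range N, 1 / (x + n) := by
  induction N with
  | zero => simp
  | succ N ih =>
    rw [Finset.sum_range_succ, ← add_assoc, ← ih, ← psi_rec _ (by positivity)]
    push_cast
    congr 1
    ring

lemma psi_series (y : ℝ) (hy : 0 < y) (hy1 : y ≤ 1) :
    HasSum (fun n : ℕ => 1 / (y + n) - 1 / ((n:ℝ) + 1))
      (deriv (Real.log ∘ Real.Gamma) 1 - deriv (Real.log ∘ Real.Gamma) y) := by
  rw [hasSum_iff_tendsto_nat_of_nonneg]
  · have key : ∀ N : ℕ, ∑ n ∈ Finset.range N, (1 / (y + n) - 1 / ((n:ℝ) + 1))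
        = (deriv (Real.log ∘ Real.Gamma) 1 - deriv (Real.log ∘ Real.Gamma) y)
          - (deriv (Real.log ∘ Real.Gamma) (1 + N) - deriv (Real.log ∘ Real.Gamma) (y + N)) := by
      intro N
      rw [psi_add_nat y hy, psi_add_nat 1 one_pos, Finset.sum_sub_distrib]
      simp only [add_comm (1:ℝ)]
      ring
    simp only [key]
    have h0 : Filter.Tendsto (fun N : ℕ => deriv (Real.log ∘ Real.Gamma) (1 + N) - deriv (Real.log ∘ Real.Gamma) (y + N))
        Filter.atTop (nhds 0) := by
      refine squeeze_zero' (g := fun N : ℕ => 1 / (N : ℝ)) ?_ ?_ tendsto_one_div_atTop_nhds_zero_nat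
      · refine Filter.Eventually.of_forall fun N => ?_
        rw [sub_nonneg]
        apply psi_mono
        · simp only [Set.mem_Ioi]; positivity
        · simp only [Set.mem_Ioi]; positivity
        · linarith
      · filter_upwards [Filter.eventually_ge_atTop 1] with N hN
        have hN' : (0:ℝ) < N := by exact_mod_cast hN
        have h1 := psi_rec N hN'
        have h2 : deriv (Real.log ∘ Real.Gamma) N ≤ deriv (Real.log ∘ Real.Gamma) (y + N) := by
          apply psi_mono
          · exact hN'
          · simp only [Set.mem_Ioi]; positivity
          · linarith
        rw [add_comm (1:ℝ), h1]
        linarith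
    simpa using tendsto_const_nhds.sub h0
  · intro n
    rw [sub_nonneg]
    apply one_div_le_one_div_of_le
    · positivity
    · linarith

noncomputable def gT (n : ℕ) (x : ℝ) : ℝ := (x + 2 * n)⁻¹ - 1 / (2 * ((n:ℝ) + 1))

lemma gT_iter (n k : ℕ) (x : ℝ) :
    iteratedDeriv (k+1) (gT n) x = (-1)^(k+1) * (k+1).factorial * (x + 2 * n)^(-1 - (k + 1 : ℕ) : ℤ) := by
  have h1 : gT n = fun x => - (1 / (2 * ((n:ℝ) + 1))) + (fun z : ℝ => z⁻¹) (x + 2 * n) := by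
    funext x; simp only [gT]; ring
  rw [h1, iteratedDeriv_const_add (by omega), iteratedDeriv_comp_add_const, iteratedDeriv_eq_iterate]
  exact iter_deriv_inv (k+1) (x + 2 * n)

lemma gT_iter_within (n k : ℕ) {x : ℝ} (hx : x ∈ Set.Ioo (1/4 : ℝ) 2) :
    iteratedDerivWithin (k+1) (gT n) (Set.Ioo (1/4 : ℝ) 2) x
      = (-1)^(k+1) * (k+1).factorial * (x + 2 * n)^(-1 - (k + 1 : ℕ) : ℤ) := by
  rw [iteratedDerivWithin_of_isOpen isOpen_Ioo hx, gT_iter]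

lemma gT_contDiffOn (n : ℕ) : ContDiffOn ℝ (⊤ : ℕ∞) (gT n) (Set.Ioo (1/4 : ℝ) 2) := by
  unfold gT
  refine ContDiffOn.sub (ContDiffOn.inv (by fun_prop) ?_) contDiffOn_const
  intro x hx
  have := hx.1
  positivity

lemma gT_sum_iter (k : ℕ) (hsum : ∀ t ∈ Set.Ioo (1/4 : ℝ) 2, Summable (fun n : ℕ => gT n t)) {x : ℝ} (hx : x ∈ Set.Ioo (1/4 : ℝ) 2) :
    iteratedDeriv (k+1) (fun x => ∑' n, gT n x) x
      = ∑' n : ℕ, (-1)^(k+1) * (k+1).factorial * (x + 2 * n)^(-1 - (k + 1 : ℕ) : ℤ) := by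
  rw [← iteratedDerivWithin_of_isOpen isOpen_Ioo hx, iteratedDerivWithin_tsum (k+1) isOpen_Ioo hx hsum]
  · exact tsum_congr fun n => gT_iter_within n k hx
  · intro j hj _
    obtain ⟨j, rfl⟩ : ∃ i, j = i + 1 := ⟨j - 1, by omega⟩
    apply SummableLocallyUniformlyOn_of_locally_bounded isOpen_Ioo
    intro K hK _
    refine ⟨fun n : ℕ => (j+1).factorial * (4^(j+2) * (1 / ((n + 1 : ℕ) : ℝ)^(j+2))), ?_, ?_⟩
    · apply Summable.mul_left
      apply Summable.mul_left
      exact (summable_nat_add_iff (f := fun n : ℕ => 1 / (n:ℝ)^(j+2)) 1).2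
        (Real.summable_one_div_nat_pow.2 (by omega))
    · intro n t ht
      have ht' := hK ht
      have h14 := ht'.1
      rw [gT_iter_within n j ht']
      have hp : 0 < t + 2 * n := by positivity
      rw [norm_mul, norm_mul, norm_pow, norm_neg, norm_one, one_pow, one_mul]
      have e : (-1 - (j + 1 : ℕ) : ℤ) = -((j + 2 : ℕ) : ℤ) := by push_cast; ring
      rw [e, zpow_neg, zpow_natCast, Real.norm_of_nonneg (by positivity), Real.norm_of_nonneg (by positivity)]
      beta_reduce
      gcongr
      rw [← one_div, mul_one_div, ← div_pow, ← one_div_pow]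
      apply pow_le_pow_left₀ (by positivity)
      rw [div_le_div_iff₀ hp (by positivity)]
      push_cast
      have : (0:ℝ) ≤ n := n.cast_nonneg
      linarith
  · intro n j r _ hr
    have h := (gT_contDiffOn n).differentiableOn_iteratedDerivWithin (m := j)
      (by exact_mod_cast ENat.natCast_lt_top j) isOpen_Ioo.uniqueDiffOn
    exact (h r hr).differentiableAt (isOpen_Ioo.mem_nhds hr)

lemma R_eq {x : ℝ} (hx : 0 < x) : Real.log ‖(Complex.Gammaℝ (x:ℂ))⁻¹‖
    = x / 2 * Real.log Real.pi - (Real.log ∘ Real.Gamma) (x / 2) := by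
  have h1 : (Complex.Gammaℝ (x:ℂ)) = ((Real.pi ^ (-x/2) * Real.Gamma (x/2) : ℝ) : ℂ) := by
    rw [Complex.Gammaℝ_def]
    push_cast
    rw [Complex.ofReal_cpow Real.pi_pos.le, ← Complex.Gamma_ofReal]
    push_cast
    rfl
  have hG : 0 < Real.Gamma (x/2) := Real.Gamma_pos_of_pos (by positivity)
  rw [norm_inv, Real.log_inv, h1, Complex.norm_real, Real.norm_eq_abs, Real.log_abs,
    Real.log_mul (by positivity) hG.ne', Real.log_rpow Real.pi_pos]
  simp only [Function.comp_apply]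
  ring

lemma gT_hasSum {x : ℝ} (hx : x ∈ Set.Ioo (1/4 : ℝ) 2) : HasSum (fun n => gT n x)
    ((deriv (Real.log ∘ Real.Gamma) 1 - deriv (Real.log ∘ Real.Gamma) (x/2)) / 2) := by
  have h0 := hx.1
  have h2 := hx.2
  have h := (psi_series (x/2) (by linarith) (by linarith)).div_const 2
  refine h.congr_fun ?_
  intro n
  have : x / 2 + n = (x + 2 * n) / 2 := by ring
  simp only [gT, this]
  have hp : x + 2 * n ≠ 0 := by positivity
  field_simp

lemma R_deriv {x : ℝ} (hx : x ∈ Set.Ioo (1/4 : ℝ) 2) :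
    deriv (fun x : ℝ => Real.log ‖(Complex.Gammaℝ (x:ℂ))⁻¹‖) x
      = (Real.log Real.pi / 2 - deriv (Real.log ∘ Real.Gamma) 1 / 2) + ∑' n, gT n x := by
  have hx0 : 0 < x := by linarith [hx.1]
  have he : (fun x : ℝ => Real.log ‖(Complex.Gammaℝ (x:ℂ))⁻¹‖) =ᶠ[nhds x]
      fun x => x / 2 * Real.log Real.pi - (Real.log ∘ Real.Gamma) (x / 2) := by
    filter_upwards [eventually_gt_nhds hx0] with y hy using R_eq hy
  rw [he.deriv_eq, (gT_hasSum hx).tsum_eq]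
  have hd := (psi_diff (x := x/2) (by positivity)).hasDerivAt
  have hd2 := hd.comp x ((hasDerivAt_id x).div_const 2)
  have hd3 := (((hasDerivAt_id x).div_const 2).mul_const (Real.log Real.pi)).sub hd2
  have := hd3.deriv
  simp only [Function.comp_def] at this ⊢
  refine Eq.trans this ?_
  ring

lemma R_iter (m : ℕ) (hm : 1 ≤ m) :
    iteratedDeriv (2*m+1) (fun x : ℝ => Real.log ‖(Complex.Gammaℝ (x:ℂ))⁻¹‖) (1/2)
      = (2*m).factorial * (2^(2*m+1) * ∑' n : ℕ, 1 / ((4 * n + 1 : ℕ) : ℝ)^(2*m+1)) := by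
  have hx : (1/2 : ℝ) ∈ Set.Ioo (1/4 : ℝ) 2 := by norm_num
  obtain ⟨k, hk⟩ : ∃ k, 2 * m = k + 1 := ⟨2*m-1, by omega⟩
  have he : deriv (fun x : ℝ => Real.log ‖(Complex.Gammaℝ (x:ℂ))⁻¹‖) =ᶠ[nhds (1/2)]
      fun x => (Real.log Real.pi / 2 - deriv (Real.log ∘ Real.Gamma) 1 / 2) + ∑' n, gT n x := by
    filter_upwards [isOpen_Ioo.mem_nhds hx] with y hy using R_deriv hy
  rw [iteratedDeriv_succ', he.iteratedDeriv_eq, iteratedDeriv_const_add (by omega), hk,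
    gT_sum_iter k (fun t ht => (gT_hasSum ht).summable) hx, ← hk, ← tsum_mul_left, ← tsum_mul_left]
  apply tsum_congr
  intro n
  have e : (-1 - (2 * m : ℕ) : ℤ) = -((2 * m + 1 : ℕ) : ℤ) := by push_cast; ring
  rw [e, zpow_neg, zpow_natCast, pow_mul, neg_one_sq, one_pow, one_mul]
  congr 1
  rw [show (1/2 + 2 * n : ℝ) = ((4 * n + 1 : ℕ):ℝ) / 2 by push_cast; ring, div_pow, inv_div]
  ring

lemma summ4 (k : ℕ) (hk : 1 < k) (a b : ℕ) (ha : 0 < a) :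
    Summable (fun n : ℕ => 1 / ((a * n + b : ℕ) : ℝ)^k) := by
  have h : Summable (fun n : ℕ => 1 / (n : ℝ)^k) := Real.summable_one_div_nat_pow.2 hk
  have hi : Function.Injective (fun n : ℕ => a * n + b) := by
    intro x y hxy
    have h1 : a * x = a * y := by simpa using hxy
    exact Nat.eq_of_mul_eq_mul_left ha h1
  simpa only [Function.comp_def] using h.comp_injective hi

lemma split4 (f : ℕ → ℝ) (hf : Summable f) :
    ∑' n, f n = ∑' n, f (2 * n) + (∑' n, f (4 * n + 1) + ∑' n, f (4 * n + 3)) := by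
  have i0 : Function.Injective (fun n : ℕ => 2 * n) := by intro x y h; simpa using h
  have i1 : Function.Injective (fun n : ℕ => 2 * n + 1) := by intro x y h; simpa using h
  have h0 : Summable (fun n => f (2 * n)) := by
    simpa only [Function.comp_def] using hf.comp_injective i0
  have h1 : Summable (fun n => f (2 * n + 1)) := by
    simpa only [Function.comp_def] using hf.comp_injective i1
  have h2 : Summable (fun n => f (2 * (2 * n) + 1)) := by
    simpa only [Function.comp_def] using h1.comp_injective i0
  have h3 : Summable (fun n => f (2 * (2 * n + 1) + 1)) := by
    simpa only [Function.comp_def] using h1.comp_injective i1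
  rw [← tsum_even_add_odd (f := f) h0 h1,
    ← tsum_even_add_odd (f := fun n => f (2 * n + 1)) h2 h3]
  congr 2
  · apply tsum_congr; intro n; congr 1; ring
  · apply tsum_congr; intro n; congr 1; ring

lemma sum_PQ (k : ℕ) (hk : 1 < k) :
    (∑' n : ℕ, 1 / ((4 * n + 1 : ℕ) : ℝ)^k) + (∑' n : ℕ, 1 / ((4 * n + 3 : ℕ) : ℝ)^k)
      = (1 - 1 / 2^k) * ∑' n : ℕ, 1 / (n : ℝ)^k := by
  have h := split4 (fun n : ℕ => 1 / (n : ℝ)^k) (Real.summable_one_div_nat_pow.2 hk)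
  have h2 : ∑' n : ℕ, 1 / ((2 * n : ℕ) : ℝ)^k = 1 / 2^k * ∑' n : ℕ, 1 / (n : ℝ)^k := by
    rw [← tsum_mul_left]
    apply tsum_congr; intro n; push_cast; rw [mul_pow]; simp; ring
  rw [h2] at h
  linarith

lemma sum_P_sub_Q (m : ℕ) (hm : 1 ≤ m) :
    (∑' n : ℕ, 1 / ((4 * n + 1 : ℕ) : ℝ)^(2*m+1)) - (∑' n : ℕ, 1 / ((4 * n + 3 : ℕ) : ℝ)^(2*m+1))
      = (Real.pi/2)^(2*m+1) * ((-1)^m * (eulerNumber (2*m) : ℝ)) / (2 * (2*m).factorial) := by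
  have H := hasSum_one_div_nat_pow_mul_sin (k := m) (by omega) (x := 1/4) (by norm_num)
  have h := split4 _ H.summable
  rw [H.tsum_eq] at h
  have e0 : ∀ n : ℕ, Real.sin (2 * Real.pi * ((2 * n : ℕ):ℝ) * (1/4)) = 0 := by
    intro n
    rw [show 2 * Real.pi * ((2 * n : ℕ):ℝ) * (1/4) = n * Real.pi by push_cast; ring]
    exact Real.sin_nat_mul_pi n
  have e1 : ∀ n : ℕ, Real.sin (2 * Real.pi * ((4 * n + 1 : ℕ):ℝ) * (1/4)) = 1 := by
    intro n
    rw [show 2 * Real.pi * ((4 * n + 1 : ℕ):ℝ) * (1/4) = Real.pi / 2 + n * (2 * Real.pi) by push_cast; ring]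
    rw [Real.sin_add_nat_mul_two_pi, Real.sin_pi_div_two]
  have e3 : ∀ n : ℕ, Real.sin (2 * Real.pi * ((4 * n + 3 : ℕ):ℝ) * (1/4)) = -1 := by
    intro n
    rw [show 2 * Real.pi * ((4 * n + 3 : ℕ):ℝ) * (1/4) = Real.pi / 2 + Real.pi + n * (2 * Real.pi) by push_cast; ring]
    rw [Real.sin_add_nat_mul_two_pi, Real.sin_add_pi, Real.sin_pi_div_two]
  simp only [e0, e1, e3, mul_zero, tsum_zero, zero_add, mul_one, mul_neg, tsum_neg] at h
  rw [← sub_eq_add_neg] at h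
  rw [← h]
  have hb : Polynomial.eval (1/4 : ℝ) (Polynomial.map (algebraMap ℚ ℝ) (Polynomial.bernoulli (2*m+1)))
      = (((Polynomial.bernoulli (2*m+1)).eval (1/4 : ℚ) : ℚ) : ℝ) := by
    rw [Polynomial.eval_map_algebraMap]
    have := Polynomial.aeval_algebraMap_apply (A := ℚ) ℝ (1/4 : ℚ) (Polynomial.bernoulli (2*m+1))
    simp at this ⊢
    exact this
  rw [hb, bern_quarter, Nat.factorial_succ]
  have hf : ((2*m).factorial : ℝ) ≠ 0 := by positivity
  push_cast
  rw [show (4:ℝ)^(2*m+1) = 2^(2*m+1) * 2^(2*m+1) by rw [← mul_pow]; norm_num]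
  have h21 : (2*(m:ℝ)+1) ≠ 0 := by positivity
  rw [mul_pow, div_pow, pow_succ (-1 : ℝ) m]
  field_simp

lemma sum_P (m : ℕ) (hm : 1 ≤ m) :
    2 * (∑' n : ℕ, 1 / ((4 * n + 1 : ℕ) : ℝ)^(2*m+1)) = (1 - 1 / 2^(2*m+1)) * ∑' n : ℕ, 1 / (n : ℝ)^(2*m+1)
      + (Real.pi/2)^(2*m+1) * (|(eulerNumber (2*m))| : ℚ) / (2 * (2*m).factorial) := by
  have h1 := sum_PQ (2*m+1) (by omega)
  have h2 := sum_P_sub_Q m hm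
  have h3 : 0 ≤ (∑' n : ℕ, 1 / ((4 * n + 1 : ℕ) : ℝ)^(2*m+1)) - (∑' n : ℕ, 1 / ((4 * n + 3 : ℕ) : ℝ)^(2*m+1)) := by
    rw [sub_nonneg]
    refine (summ4 (2*m+1) (by omega) 4 3 (by norm_num)).tsum_le_tsum ?_ (summ4 (2*m+1) (by omega) 4 1 (by norm_num))
    intro n
    push_cast
    gcongr
    norm_num
  have h4 : (-1)^m * (eulerNumber (2*m) : ℝ) = ((|(eulerNumber (2*m))| : ℚ) : ℝ) := by
    rw [h2] at h3
    have h5 : 0 ≤ (-1)^m * (eulerNumber (2*m) : ℝ) := by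
      by_contra hc
      push Not at hc
      have : (Real.pi/2)^(2*m+1) * ((-1)^m * (eulerNumber (2*m) : ℝ)) / (2 * (2*m).factorial) < 0 := by
        apply div_neg_of_neg_of_pos
        · exact mul_neg_of_pos_of_neg (by positivity) hc
        · positivity
      linarith
    rw [← abs_of_nonneg h5, abs_mul, abs_pow]
    simp
  rw [h4] at h2
  linarith

lemma Lambda_half_ne : completedRiemannZeta (((1/2 : ℝ)) : ℂ) ≠ 0 := by
  have h := zeta_half_ne
  rw [riemannZeta_def_of_ne_zero (by norm_num)] at h
  intro h0
  apply h
  have : (((1/2 : ℝ)) : ℂ) = 1/2 := by push_cast; rfl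
  rw [← this, h0, zero_div]

lemma log_norm_contDiffAt (f : ℂ → ℂ) (x : ℝ) (hf : AnalyticAt ℂ f (x:ℂ)) (h0 : f x ≠ 0) (n : ℕ) :
    ContDiffAt ℝ n (fun x : ℝ => Real.log ‖f (x:ℂ)‖) x := by
  have h1 : ContDiffAt ℝ n f (x:ℂ) := (hf.contDiffAt (n := n)).restrict_scalars ℝ
  have h2 : ContDiffAt ℝ n (fun x : ℝ => f (x:ℂ)) x :=
    h1.comp x Complex.ofRealCLM.contDiff.contDiffAt
  exact (h2.norm ℂ h0).log (by simpa using h0)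

lemma Lambda_contDiffAt (n : ℕ) :
    ContDiffAt ℝ n (fun x : ℝ => Real.log ‖completedRiemannZeta (x:ℂ)‖) (1/2) := by
  apply log_norm_contDiffAt _ _ _ Lambda_half_ne
  rw [Complex.analyticAt_iff_eventually_differentiableAt]
  have a0 : ∀ᶠ z in nhds ((((1/2 : ℝ)) : ℂ)), z ≠ 0 := by
    apply eventually_ne_nhds; norm_num
  have a1 : ∀ᶠ z in nhds ((((1/2 : ℝ)) : ℂ)), z ≠ 1 := by
    apply eventually_ne_nhds; norm_num
  filter_upwards [a0, a1] with z h0 h1 using differentiableAt_completedZeta h0 h1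

lemma Gam_contDiffAt (n : ℕ) :
    ContDiffAt ℝ n (fun x : ℝ => Real.log ‖(Complex.Gammaℝ (x:ℂ))⁻¹‖) (1/2) := by
  apply log_norm_contDiffAt (fun z => (Complex.Gammaℝ z)⁻¹)
  · exact Complex.differentiable_Gammaℝ_inv.analyticAt _
  · apply inv_ne_zero
    apply Complex.Gammaℝ_ne_zero_of_re_pos
    simp

lemma Lambda_odd (m : ℕ) :
    iteratedDeriv (2*m+1) (fun x : ℝ => Real.log ‖completedRiemannZeta (x:ℂ)‖) (1/2) = 0 := by
  set g := (fun x : ℝ => Real.log ‖completedRiemannZeta (x:ℂ)‖) with hg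
  have h1 : (fun z => g (1 - z)) = g := by
    funext z
    simp only [hg]
    push_cast
    rw [completedRiemannZeta_one_sub]
  have h2 := congrFun (iteratedDeriv_comp_const_sub (2*m+1) g 1) (1/2)
  rw [h1, pow_succ, pow_mul] at h2
  norm_num at h2 ⊢
  linarith

lemma zeta_split (m : ℕ) :
    iteratedDeriv (2 * m + 1) (fun x : ℝ => Real.log ‖riemannZeta (x : ℂ)‖) (1 / 2)
     = iteratedDeriv (2*m+1) (fun x : ℝ => Real.log ‖(Complex.Gammaℝ (x:ℂ))⁻¹‖) (1/2) := by
  have he : (fun x : ℝ => Real.log ‖riemannZeta (x : ℂ)‖) =ᶠ[nhds (1/2)]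
      fun x : ℝ => Real.log ‖completedRiemannZeta (x:ℂ)‖ + Real.log ‖(Complex.Gammaℝ (x:ℂ))⁻¹‖ := by
    have hc : ContinuousAt (fun x : ℝ => completedRiemannZeta (x:ℂ)) (1/2) := by
      apply ContinuousAt.comp (g := completedRiemannZeta)
      · exact (differentiableAt_completedZeta (by norm_num) (by norm_num)).continuousAt
      · exact Complex.continuous_ofReal.continuousAt
    filter_upwards [hc.eventually_ne Lambda_half_ne, eventually_gt_nhds (show (0:ℝ) < 1/2 by norm_num)] with x h0 hx
    rw [riemannZeta_def_of_ne_zero (by exact_mod_cast hx.ne'), div_eq_mul_inv, norm_mul, Real.log_mul]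
    · simpa using h0
    · simpa using Complex.Gammaℝ_ne_zero_of_re_pos (by simpa using hx)
  rw [he.iteratedDeriv_eq, iteratedDeriv_fun_add (Lambda_contDiffAt _) (Gam_contDiffAt _), Lambda_odd, zero_add]

/-- for `m ≥ 1`,
`(log|ζ|)^{(2m+1)}(1/2) = ½ (2m)! (2^{2m+1} - 1) ζ(2m+1) + ¼ π^{2m+1} |E_{2m}|`. -/
theorem log_abs_zeta_odd_deriv_one_half (m : ℕ) (hm : 1 ≤ m) :
    ((iteratedDeriv (2 * m + 1) (fun x : ℝ => Real.log ‖riemannZeta (x : ℂ)‖) (1 / 2) : ℝ) : ℂ) =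
      (1 / 2) * ((2 * m).factorial : ℂ) * (2 ^ (2 * m + 1) - 1) *
          riemannZeta ((2 * m + 1 : ℕ) : ℂ)
        + (1 / 4) * (Real.pi : ℂ) ^ (2 * m + 1) * ((|eulerNumber (2 * m)| : ℚ) : ℂ) := by
  rw [zeta_split, R_iter m hm, zeta_nat_eq_tsum_of_gt_one (by omega)]
  have h := sum_P m hm
  have hz : (∑' n : ℕ, 1 / (n : ℂ) ^ (2 * m + 1)) = ((∑' n : ℕ, 1 / (n : ℝ) ^ (2 * m + 1) : ℝ) : ℂ) := by
    push_cast
    rfl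
  rw [hz]
  generalize (∑' n : ℕ, 1 / (n : ℝ) ^ (2 * m + 1)) = Z at *
  generalize (∑' n : ℕ, 1 / ((4 * n + 1 : ℕ) : ℝ)^(2*m+1)) = P at *
  generalize |eulerNumber (2 * m)| = E at *
  have hr : ((2*m).factorial * (2^(2*m+1) * P) : ℝ) = (1 / 2) * ((2 * m).factorial : ℝ) * (2 ^ (2 * m + 1) - 1) * Z
        + (1 / 4) * Real.pi ^ (2 * m + 1) * (E : ℝ) := by
    have hP : P = ((1 - 1 / 2^(2*m+1)) * Z + (Real.pi/2)^(2*m+1) * (E : ℝ) / (2 * (2*m).factorial)) / 2 := by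
      linarith
    have hf : ((2*m).factorial : ℝ) ≠ 0 := by positivity
    rw [hP, div_pow]
    field_simp
    ring
  rw [hr]
  push_cast
  ring
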